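/- Let σ be a permutation of a finite set L of size r whose cycle type is the partition μ, and let h be an N × N complex matrix with eigenvalues h₁, …, h_N. Let h^{(L)} denote the operator on (ℂ^N)^{⊗L} acting as h in every tensor factor, and let σ act on (ℂ^N)^{⊗L} by permuting tensor factors. Then Tr(h^{(L)} ∘ σ) = p_μ(h₁, …, h_N), the power sum symmetric polynomial of the eigenvalues indexed by μ. -/

import Mathlib

/-!
Expanding traces, `∑ φ, ∏ k, h (φ k) (φ (σ⁻¹ k))` is the trace of `h^{(L)} ∘ σ`
(`tensorTrace h σ`). It depends only on `σ` up to relabelling of `L` (`tensorTrace_conj`), and it is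
multiplicative when `L` is split into two `σ`-invariant parts (`tensorTrace_split`). For a single
cycle of length `n` the sum runs over closed walks of length `n`, so it is `Tr (h ^ n)`
(`tensorTrace_of_cycleType`). Splitting off the cycles of `σ` one at a time therefore gives
`∏ Tr (h ^ μᵢ)` (`tensorTrace_eq`).

It remains to see that `Tr (h ^ n)` is the `n`-th power sum of the eigenvalues (`trace_pow_eq`).
For every polynomial `p`, factoring `p` into linear factors gives `det (p h) = ∏ p(evᵢ)`
(`det_aeval_eq`); applied to `p = t - X ^ n` this identifies the characteristic polynomial of
`h ^ n` as `∏ (X - evᵢ ^ n)`, from which the trace is read off.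
-/

open Equiv.Perm in
/-- A permutation preserving a subset is the disjoint product of its restrictions to the subset and
to the complement, so its cycle type is the sum of theirs. -/
theorem cycleType_split {L : Type*} [Fintype L] [DecidableEq L] (σ : Equiv.Perm L)
    (p : L → Prop) [DecidablePred p] (hp : ∀ x, p (σ x) ↔ p x) :
    σ.cycleType = (σ.subtypePerm hp).cycleType
      + (σ.subtypePerm (p := fun x => ¬ p x) fun x => not_congr (hp x)).cycleType := by
  rw [← cycleType_ofSubtype (g := σ.subtypePerm hp),
    ← cycleType_ofSubtype (g := σ.subtypePerm (p := fun x => ¬ p x) fun x => not_congr (hp x)),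
    ← Equiv.Perm.Disjoint.cycleType_mul]
  · congr 1
    ext x
    rw [Equiv.Perm.mul_apply]
    by_cases hx : p x
    · rw [ofSubtype_apply_of_not_mem (p := fun x => ¬ p x) _ (by simpa using hx),
        ofSubtype_apply_of_mem _ hx, subtypePerm_apply]
    · rw [ofSubtype_apply_of_mem (p := fun x => ¬ p x) _ hx, subtypePerm_apply,
        ofSubtype_apply_of_not_mem]
      simpa [hp] using hx
  · intro x
    by_cases hx : p x
    · exact Or.inr (ofSubtype_apply_of_not_mem (p := fun x => ¬ p x) _ (by simpa using hx))
    · exact Or.inl (ofSubtype_apply_of_not_mem _ hx)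

/-- The trace of `h^{(L)} ∘ σ` on `(ℂ^N)^{⊗L}`, written out in the standard basis, which is indexed
by the maps `L → Fin N`. -/
noncomputable def tensorTrace {N : ℕ} {L : Type*} [Fintype L] [DecidableEq L]
    (h : Matrix (Fin N) (Fin N) ℂ) (σ : Equiv.Perm L) : ℂ :=
  ∑ φ : L → Fin N, ∏ k : L, h (φ k) (φ (σ.symm k))

/-- The factors may be indexed by the source `k` of the arrow `k ↦ σ k` instead of its target. -/
theorem tensorTrace_eq_sum {N : ℕ} {L : Type*} [Fintype L] [DecidableEq L]
    (h : Matrix (Fin N) (Fin N) ℂ) (σ : Equiv.Perm L) :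
    tensorTrace h σ = ∑ φ : L → Fin N, ∏ k : L, h (φ (σ k)) (φ k) := by
  refine Finset.sum_congr rfl fun φ _ => ?_
  rw [← Equiv.prod_comp σ]
  simp

theorem tensorTrace_conj {N : ℕ} {L M : Type*} [Fintype L] [DecidableEq L] [Fintype M]
    [DecidableEq M] (h : Matrix (Fin N) (Fin N) ℂ) (σ : Equiv.Perm L) (τ : Equiv.Perm M)
    (e : L ≃ M) (he : ∀ x, e (σ x) = τ (e x)) :
    tensorTrace h σ = tensorTrace h τ := by
  rw [tensorTrace_eq_sum, tensorTrace_eq_sum]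
  refine (Fintype.sum_equiv (Equiv.arrowCongr e.symm (Equiv.refl (Fin N))) _ _ fun φ => ?_).symm
  rw [← Equiv.prod_comp e]
  simp [Equiv.arrowCongr, he]

theorem tensorTrace_split {N : ℕ} {L : Type*} [Fintype L] [DecidableEq L]
    (h : Matrix (Fin N) (Fin N) ℂ) (σ : Equiv.Perm L)
    (p : L → Prop) [DecidablePred p] (hp : ∀ x, p (σ x) ↔ p x) :
    tensorTrace h σ = tensorTrace h (σ.subtypePerm hp) *
      tensorTrace h (σ.subtypePerm (p := fun x => ¬ p x) fun x => not_congr (hp x)) := by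
  simp only [tensorTrace_eq_sum]
  rw [Finset.sum_mul_sum, ← Fintype.sum_prod_type']
  refine Fintype.sum_equiv (Equiv.piEquivPiSubtypeProd p fun _ => Fin N) _ _ fun φ => ?_
  rw [← Fintype.prod_subtype_mul_prod_subtype p]
  rfl

theorem tensorTrace_one {N : ℕ} {L : Type*} [Fintype L] [DecidableEq L]
    (h : Matrix (Fin N) (Fin N) ℂ) :
    tensorTrace h (1 : Equiv.Perm L) = h.trace ^ Fintype.card L := by
  rw [tensorTrace_eq_sum, Matrix.trace, ← Finset.card_univ, ← Finset.prod_const,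
    Finset.prod_univ_sum, Fintype.piFinset_univ]
  rfl

/-- Walk expansion of a matrix power: the walks `φ` of length `n`, weighted by the entries of `h`
and by a function of their endpoints, sum to the entries of `h ^ n` weighted by that function. -/
theorem sum_walks {N : ℕ} (h : Matrix (Fin N) (Fin N) ℂ) (n : ℕ) (g : Fin N → Fin N → ℂ) :
    ∑ φ : Fin (n + 1) → Fin N, (∏ j : Fin n, h (φ j.succ) (φ j.castSucc)) * g (φ (Fin.last n)) (φ 0)
      = ∑ i, ∑ j, (h ^ n) i j * g i j := by
  induction n generalizing g with
  | zero =>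
    rw [← (Equiv.funUnique (Fin 1) (Fin N)).symm.sum_comp]
    simp [Matrix.one_apply]
  | succ n ih =>
    rw [← (Fin.snocEquiv fun _ : Fin (n + 2) => Fin N).sum_comp, Fintype.sum_prod_type,
      Finset.sum_comm]
    have key : ∀ ψ : Fin (n + 1) → Fin N,
        ∑ x, (∏ j : Fin (n + 1),
          h ((Fin.snocEquiv fun _ : Fin (n + 2) => Fin N) (x, ψ) j.succ)
            ((Fin.snocEquiv fun _ : Fin (n + 2) => Fin N) (x, ψ) j.castSucc))
          * g ((Fin.snocEquiv fun _ : Fin (n + 2) => Fin N) (x, ψ) (Fin.last (n + 1)))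
            ((Fin.snocEquiv fun _ : Fin (n + 2) => Fin N) (x, ψ) 0)
        = (∏ j : Fin n, h (ψ j.succ) (ψ j.castSucc))
          * (fun i j => ∑ x, h x i * g x j) (ψ (Fin.last n)) (ψ 0) := by
      intro ψ
      rw [Finset.mul_sum]
      refine Finset.sum_congr rfl fun x _ => ?_
      rw [Fin.prod_univ_castSucc]
      have h0 : (0 : Fin (n + 2)) = Fin.castSucc 0 := rfl
      simp only [Fin.snocEquiv_apply, Fin.succ_castSucc, Fin.succ_last, h0]
      simp only [Fin.snoc_castSucc, Fin.snoc_last]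
      ring
    refine (Finset.sum_congr rfl fun ψ _ => key ψ).trans
      ((ih fun i j => ∑ x, h x i * g x j).trans ?_)
    simp only [pow_succ', Matrix.mul_apply, Finset.sum_mul, Finset.mul_sum]
    -- The two sides sum over `(i, j, x)` and `(x, j, i)` respectively.
    rw [Finset.sum_congr rfl fun _ _ => Finset.sum_comm, Finset.sum_comm]
    refine Finset.sum_congr rfl fun x _ => ?_
    rw [Finset.sum_comm]
    refine Finset.sum_congr rfl fun j _ => Finset.sum_congr rfl fun i _ => ?_
    ring

theorem tensorTrace_finRotate {N : ℕ} (h : Matrix (Fin N) (Fin N) ℂ) (n : ℕ) :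
    tensorTrace h (finRotate (n + 1)) = (h ^ (n + 1)).trace := by
  have := sum_walks h n fun i j => h j i
  rw [pow_succ, Matrix.trace, tensorTrace_eq_sum]
  simp only [Matrix.diag_apply, Matrix.mul_apply]
  rw [← this]
  refine Finset.sum_congr rfl fun φ _ => ?_
  rw [Fin.prod_univ_castSucc]
  simp

/-- A permutation of `L` that is a single cycle through all of `L` is conjugate to the rotation of
`Fin (card L)`. -/
theorem tensorTrace_of_cycleType {N : ℕ} {L : Type*} [Fintype L] [DecidableEq L]
    (h : Matrix (Fin N) (Fin N) ℂ) (σ : Equiv.Perm L) (hσ : σ.cycleType = {Fintype.card L}) :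
    tensorTrace h σ = (h ^ Fintype.card L).trace := by
  have h2 : 2 ≤ Fintype.card L := Equiv.Perm.two_le_of_mem_cycleType (σ := σ) (by simp [hσ])
  obtain ⟨n, hn⟩ := Nat.exists_eq_add_of_le' h2
  let e : L ≃ Fin (n + 2) := Fintype.equivFinOfCardEq hn
  let f : Fin (n + 2) ≃ Subtype (fun _ : L => True) :=
    e.symm.trans (Equiv.subtypeUnivEquiv fun _ => trivial).symm
  have hc : IsConj ((finRotate (n + 2)).extendDomain f) σ := by
    apply Equiv.Perm.isConj_of_cycleType_eq
    rw [Equiv.Perm.cycleType_extendDomain, cycleType_finRotate, hσ, hn]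
  obtain ⟨π, hπ⟩ := isConj_iff.1 hc
  rw [hn, ← tensorTrace_finRotate]
  symm
  refine tensorTrace_conj h _ _ (e.symm.trans π) fun x => ?_
  have := Equiv.Perm.extendDomain_apply_image (finRotate (n + 2)) f x
  have hf : ∀ y, (f y : L) = e.symm y := fun y => rfl
  rw [hf, hf] at this
  rw [← hπ]
  simp [this]

/-- Splitting off cycles one at a time expresses the trace by the traces of powers of `h`. -/
theorem tensorTrace_eq {N : ℕ} (h : Matrix (Fin N) (Fin N) ℂ) (n : ℕ) :
    ∀ {L : Type*} [Fintype L] [DecidableEq L], Fintype.card L = n → ∀ σ : Equiv.Perm L,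
    tensorTrace h σ = (σ.cycleType.map fun a => (h ^ a).trace).prod
      * h.trace ^ (n - σ.cycleType.sum) := by
  induction n using Nat.strong_induction_on with
  | _ n ih =>
    intro L _ _ hL σ
    by_cases h1 : σ = 1
    · subst h1
      simp [tensorTrace_one, hL]
    obtain ⟨c, hc⟩ := Finset.nonempty_iff_ne_empty.2
      (mt Equiv.Perm.cycleFactorsFinset_eq_empty_iff.1 h1)
    have hcyc := (Equiv.Perm.mem_cycleFactorsFinset_iff.1 hc).1
    have hp : ∀ x, c (σ x) ≠ σ x ↔ c x ≠ x := fun x => by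
      simpa only [Equiv.Perm.mem_support] using Equiv.Perm.mem_cycleFactorsFinset_support hc x
    have hcard : Fintype.card {x // c x ≠ x} = c.support.card := Fintype.card_subtype _
    have hcomp : Fintype.card {x // ¬ c x ≠ x} = n - c.support.card := by
      rw [Fintype.card_subtype_compl, hcard, hL]
    have hle : c.support.card ≤ n := hL ▸ Finset.card_le_univ _
    have h2 := hcyc.two_le_card_support
    have hct : (σ.subtypePerm (p := fun x => c x ≠ x) hp).cycleType = {c.support.card} := by
      rw [← Equiv.Perm.cycleType_ofSubtype, ← hcyc.cycleType]
      congr 1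
      ext x
      by_cases hx : c x ≠ x
      · rw [Equiv.Perm.ofSubtype_apply_of_mem (p := fun x => c x ≠ x) _ hx, Equiv.Perm.subtypePerm_apply]
        exact ((Equiv.Perm.mem_cycleFactorsFinset_iff.1 hc).2 x (Equiv.Perm.mem_support.2 hx)).symm
      · rw [Equiv.Perm.ofSubtype_apply_of_not_mem (p := fun x => c x ≠ x) _ hx, not_not.1 hx]
    rw [tensorTrace_split h σ (fun x => c x ≠ x) hp, cycleType_split σ (fun x => c x ≠ x) hp,
      tensorTrace_of_cycleType h _ (by rw [hct, hcard]), hct, hcard,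
      ih (n - c.support.card) (by omega) hcomp]
    simp [mul_assoc, Nat.sub_sub]

/-- The determinant of a polynomial in `h` is the product of its values at the eigenvalues; both
sides are multiplicative in `p`, and for linear `p` this is the hypothesis. -/
theorem det_aeval_eq {N : ℕ} (h : Matrix (Fin N) (Fin N) ℂ) (ev : Fin N → ℂ)
    (hev : h.charpoly = ∏ i : Fin N, (Polynomial.X - Polynomial.C (ev i))) (p : Polynomial ℂ) :
    (Polynomial.aeval h p).det = ∏ i, p.eval (ev i) := by
  have hlin : ∀ s : ℂ, (Polynomial.aeval h (Polynomial.X - Polynomial.C s)).det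
      = ∏ i, (Polynomial.X - Polynomial.C s).eval (ev i) := by
    intro s
    have h1 := Matrix.eval_charpoly h s
    rw [hev, Polynomial.eval_prod] at h1
    have h2 : Polynomial.aeval h (Polynomial.X - Polynomial.C s)
        = -(Matrix.scalar (Fin N) s - h) := by
      simp [Matrix.algebraMap_eq_diagonal, Pi.algebraMap_def]
    rw [h2, Matrix.det_neg, ← h1, Fintype.card_fin]
    simp only [Polynomial.eval_sub, Polynomial.eval_X, Polynomial.eval_C]
    rw [← Fin.prod_const, ← Finset.prod_mul_distrib]
    exact Finset.prod_congr rfl fun i _ => by ring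
  have hms : ∀ m : Multiset ℂ,
      (Polynomial.aeval h (m.map fun s => Polynomial.X - Polynomial.C s).prod).det
      = ∏ i, (m.map fun s => Polynomial.X - Polynomial.C s).prod.eval (ev i) := by
    intro m
    induction m using Multiset.induction_on with
    | empty => simp
    | cons a m ihm =>
      rw [Multiset.map_cons, Multiset.prod_cons, map_mul, Matrix.det_mul, hlin, ihm,
        ← Finset.prod_mul_distrib]
      simp
  have hs := (IsAlgClosed.splits p).eq_prod_roots
  rw [hs, map_mul, Matrix.det_mul, hms]
  simp only [Polynomial.eval_mul, Finset.prod_mul_distrib]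
  congr 1
  simp [Matrix.algebraMap_eq_diagonal, Matrix.det_diagonal]

theorem trace_pow_eq {N : ℕ} (h : Matrix (Fin N) (Fin N) ℂ) (ev : Fin N → ℂ)
    (hev : h.charpoly = ∏ i : Fin N, (Polynomial.X - Polynomial.C (ev i))) (n : ℕ) :
    (h ^ n).trace = ∑ i, ev i ^ n := by
  have hchar : (h ^ n).charpoly = ∏ i, (Polynomial.X - Polynomial.C (ev i ^ n)) := by
    refine Polynomial.funext fun t => ?_
    have := det_aeval_eq h ev hev (Polynomial.C t - Polynomial.X ^ n)
    rw [Matrix.eval_charpoly, Polynomial.eval_prod]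
    simpa [Matrix.algebraMap_eq_diagonal, Pi.algebraMap_def] using this
  have hroots : (h ^ n).charpoly.roots = Finset.univ.val.map fun i => ev i ^ n := by
    rw [hchar, ← Polynomial.roots_multiset_prod_X_sub_C (Finset.univ.val.map fun i => ev i ^ n),
      Multiset.map_map]
    rfl
  rw [Matrix.trace_eq_sum_roots_charpoly, hroots]
  rfl

/-- Let `σ` be a permutation of a finite set `L` of size `r`, and let `h` be an
`N × N` complex matrix with eigenvalues `ev 0, …, ev (N-1)` (the roots of its
characteristic polynomial).  Identify `End((ℂ^N)^{⊗L})` with matrices indexed by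
`L → Fin N`; the operator `h^{(L)} ∘ σ` (with `h` acting diagonally in every
factor and `σ` permuting the tensor factors via `σ(⊗ v_k) = ⊗ v_{σ⁻¹(k)}`) has
trace `∑_{φ : L → Fin N} ∏_{k ∈ L} h (φ k) (φ (σ⁻¹ k))`, and this equals the
power sum `p_μ(ev)` where `μ = cyc(σ)` is the cycle type of `σ` regarded as a
partition of `r`: the product of `p_a = ∑ i, (ev i)^a` over the nontrivial cycle
lengths `a`, times `p_1` once for each fixed point. -/
theorem stmt13 {N r : ℕ} {L : Type*} [Fintype L] [DecidableEq L]
    (hL : Fintype.card L = r) (σ : Equiv.Perm L)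
    (h : Matrix (Fin N) (Fin N) ℂ) (ev : Fin N → ℂ)
    (hev : h.charpoly = ∏ i : Fin N, (Polynomial.X - Polynomial.C (ev i))) :
    ∑ φ : L → Fin N, ∏ k : L, h (φ k) (φ (σ.symm k))
      = (σ.cycleType.map fun a => ∑ i : Fin N, ev i ^ a).prod
          * (∑ i : Fin N, ev i) ^ (r - σ.cycleType.sum) := by
  have key := tensorTrace_eq h r hL σ
  have htr : h.trace = ∑ i, ev i := by simpa using trace_pow_eq h ev hev 1
  simp only [trace_pow_eq h ev hev, htr] at key
  exact key
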